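/- For every real a > 0, the improper integral lim_{T→∞} ∫₁^T cos(a·x) · (ln x)/x dx exists and equals −π²/24 + γ·(γ/2 + ln a) + (ln a)²/2 + Σ_{n=1}^∞ (−a²)^n / ((2n)! · (2n)²), where γ is the Euler–Mascheroni constant and the series converges absolutely. -/

import Mathlib

open MeasureTheory Filter

/-!
For `Re z > 0` the Mellin transform of `t ↦ exp (-z t)` is `Γ(s) z ^ (-s)`, and its second
derivative at `s = 1` is `∫₀^∞ exp (-z x) (log x)² dx = z⁻¹ ((γ + log z)² + π² / 6)`; here
`Γ''(1) = γ² + π² / 6` comes from the reflection formula. The part of this integral over `(0, 1]`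
expands termwise into a power series, and integration by parts turns the rest into
`∫₁^∞ exp (-z x) log x / x dx`. Integrating by parts the other way writes the latter as
`z⁻¹ ∫₁^∞ exp (-z x) (1 - log x) / x² dx`, which converges absolutely and is continuous up to the
imaginary axis. So the formula persists for `z = a i`, and the theorem is its real part.
-/

section MellinLog

open Set Asymptotics Topology

variable {E : Type*} [NormedAddCommGroup E] [NormedSpace ℂ E]

theorem hasMellin_log_pow_smul {f : ℝ → E} {a b : ℝ} {s : ℂ}
    (hfc : LocallyIntegrableOn f (Ioi 0)) (hf_top : f =O[atTop] (· ^ (-a))) (hs_top : s.re < a)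
    (hf_bot : f =O[𝓝[>] 0] (· ^ (-b))) (hs_bot : b < s.re) (n : ℕ) :
    HasMellin (fun t => Real.log t ^ n • f t) s (iteratedDeriv n (mellin f) s) := by
  induction n generalizing f a b with
  | zero =>
    simpa [HasMellin] using mellinConvergent_of_isBigO_rpow hfc hf_top hs_top hf_bot hs_bot
  | succ n ih =>
    obtain ⟨a', hsa', ha'⟩ := exists_between hs_top
    obtain ⟨b', hb', hb's⟩ := exists_between hs_bot
    have hlog : ContinuousOn Real.log (Ioi 0) :=
      Real.continuousOn_log.mono fun _ ht => (mem_Ioi.mp ht).ne'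
    have hderiv : deriv (mellin f) =ᶠ[𝓝 s] mellin fun t => Real.log t • f t := by
      filter_upwards [(isOpen_lt continuous_const Complex.continuous_re).mem_nhds hs_bot,
        (isOpen_lt Complex.continuous_re continuous_const).mem_nhds hs_top] with w hbw hwa
      exact (mellin_hasDerivAt_of_isBigO_rpow hfc hf_top hwa hf_bot hbw).2.deriv
    rw [iteratedDeriv_succ', hderiv.iteratedDeriv_eq]
    simpa only [pow_succ, mul_smul] using
      ih (hfc.continuousOn_smul isOpen_Ioi.isLocallyClosed hlog)
        (isBigO_rpow_top_log_smul ha' hf_top) hsa' (isBigO_rpow_zero_log_smul hb' hf_bot) hb's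

end MellinLog

section LaplaceTransform

open Complex Set Topology

variable {μ : Measure ℝ} {g : ℝ → ℂ}

lemma norm_cexp_neg_mul_ofReal (z : ℂ) (x : ℝ) : ‖cexp (-z * x)‖ = Real.exp (-z.re * x) := by
  simp [norm_exp]

lemma norm_cexp_neg_mul_ofReal_le_one {z : ℂ} (hz : 0 ≤ z.re) {x : ℝ} (hx : 0 ≤ x) :
    ‖cexp (-z * x)‖ ≤ 1 := by
  rw [norm_cexp_neg_mul_ofReal, neg_mul, Real.exp_le_one_iff, neg_nonpos]
  positivity

lemma integrable_cexp_neg_mul (hμ : ∀ᵐ x ∂μ, 0 ≤ x) (hg : Integrable g μ) {z : ℂ}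
    (hz : 0 ≤ z.re) : Integrable (fun x : ℝ => cexp (-z * x) * g x) μ :=
  hg.bdd_mul (by fun_prop) (hμ.mono fun _ hx => norm_cexp_neg_mul_ofReal_le_one hz hx)

lemma continuousOn_integral_cexp_neg_mul (hμ : ∀ᵐ x ∂μ, 0 ≤ x) (hg : Integrable g μ) :
    ContinuousOn (fun z : ℂ => ∫ x : ℝ, cexp (-z * x) * g x ∂μ) {z | 0 ≤ z.re} := by
  refine continuousOn_of_dominated
    (fun z hz => (integrable_cexp_neg_mul hμ hg hz).aestronglyMeasurable) (fun z hz => ?_)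
    hg.norm (.of_forall fun x => by fun_prop)
  filter_upwards [hμ] with x hx
  rw [norm_mul]
  exact mul_le_of_le_one_left (norm_nonneg _) (norm_cexp_neg_mul_ofReal_le_one hz hx)

lemma mul_exp_neg_two_mul_le {r : ℝ} (hr : 0 < r) (x : ℝ) :
    x * Real.exp (-(2 * r) * x) ≤ r⁻¹ * Real.exp (-r * x) := by
  have hexp : r * x ≤ Real.exp (r * x) := (le_add_of_nonneg_right zero_le_one).trans
    (Real.add_one_le_exp _)
  calc x * Real.exp (-(2 * r) * x) = r⁻¹ * (r * x * Real.exp (-(2 * r) * x)) := by field_simp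
    _ ≤ r⁻¹ * (Real.exp (r * x) * Real.exp (-(2 * r) * x)) := by gcongr
    _ = r⁻¹ * Real.exp (-r * x) := by rw [← Real.exp_add]; ring_nf

lemma differentiableOn_integral_cexp_neg_mul (hμ : ∀ᵐ x ∂μ, 0 ≤ x)
    (hg : ∀ z : ℂ, 0 < z.re → Integrable (fun x : ℝ => cexp (-z * x) * g x) μ) :
    DifferentiableOn ℂ (fun z : ℂ => ∫ x : ℝ, cexp (-z * x) * g x ∂μ) {z | 0 < z.re} := by
  intro z (hz : 0 < z.re)
  set r : ℝ := z.re / 4 with hr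
  have hr0 : 0 < r := by positivity
  have hball {w : ℂ} (hw : w ∈ Metric.ball z (2 * r)) : 2 * r ≤ w.re := by
    have := (abs_lt.mp ((abs_re_le_norm (w - z)).trans_lt (mem_ball_iff_norm.mp hw))).1
    rw [sub_re] at this
    linarith
  have hmeas (w : ℂ) (hw : 0 < w.re) := (hg w hw).aestronglyMeasurable
  refine (hasDerivAt_integral_of_dominated_loc_of_deriv_le
    (F' := fun (w : ℂ) (x : ℝ) => -(x : ℂ) * (cexp (-w * x) * g x))
    (bound := fun x : ℝ => r⁻¹ * ‖cexp (-(r : ℂ) * x) * g x‖)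
    (Metric.ball_mem_nhds z (show 0 < 2 * r by positivity)) ?_ (hg z hz)
    (AEStronglyMeasurable.mul (by fun_prop) (hmeas z hz)) ?_
    ((hg r (by simpa using hr0)).norm.const_mul _) (.of_forall fun x w _ => ?_)
    ).2.differentiableAt.differentiableWithinAt
  · filter_upwards [Metric.ball_mem_nhds z (ε := 2 * r) (by positivity)] with w hw
    exact hmeas w (by linarith [hball hw])
  · filter_upwards [hμ] with x hx w hw
    rw [norm_mul, norm_mul, norm_mul, norm_neg, norm_real, Real.norm_of_nonneg hx, ← mul_assoc,
      ← mul_assoc, norm_cexp_neg_mul_ofReal, norm_cexp_neg_mul_ofReal, ofReal_re]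
    refine mul_le_mul_of_nonneg_right (le_trans ?_ (mul_exp_neg_two_mul_le hr0 x)) (norm_nonneg _)
    gcongr
    exact hball hw
  · have hexp : HasDerivAt (fun w : ℂ => cexp (-w * x)) (cexp (-w * x) * (-1 * x)) w :=
      ((hasDerivAt_id w).neg.mul_const (x : ℂ)).cexp
    exact (hexp.mul_const (g x)).congr_deriv (by ring)

end LaplaceTransform

section MellinExp

open Complex Set Asymptotics Topology

lemma isBigO_cexp_neg_mul_atTop {z : ℂ} (hz : 0 < z.re) (a : ℝ) :
    (fun t : ℝ => cexp (-z * t)) =O[atTop] fun t : ℝ => t ^ a :=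
  .trans (.of_norm_le fun t => (norm_cexp_neg_mul_ofReal z t).le)
    (isLittleO_exp_neg_mul_rpow_atTop hz a).isBigO

lemma isBigO_cexp_neg_mul_nhdsGT_zero (z : ℂ) :
    (fun t : ℝ => cexp (-z * t)) =O[𝓝[>] 0] fun t : ℝ => t ^ (-0 : ℝ) := by
  have hcont : Continuous fun t : ℝ => cexp (-z * t) := by fun_prop
  simpa using (hcont.tendsto 0).mono_left nhdsWithin_le_nhds |>.isBigO_one ℝ

lemma frequently_ofReal_nhdsNE {p : ℂ → Prop} {c : ℝ} (h : ∀ r : ℝ, c < r → p r) :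
    ∃ᶠ w in 𝓝[≠] (c : ℂ), p w := by
  have htendsto : Tendsto ((↑) : ℝ → ℂ) (𝓝[>] c) (𝓝[≠] (c : ℂ)) :=
    continuous_ofReal.continuousWithinAt.tendsto_nhdsWithin
      fun r hr => by simpa using (mem_Ioi.mp hr).ne'
  have hright : ∀ᶠ r : ℝ in 𝓝[>] c, p r := eventually_mem_nhdsWithin.mono h
  exact htendsto.frequently hright.frequently

/- Both sides are analytic in `z` on the right half-plane, and for real `z` the identity is the
substitution `t ↦ t / z` in the Gamma integral. -/
theorem mellin_cexp_neg_mul {z s : ℂ} (hz : 0 < z.re) (hs : 0 < s.re) :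
    mellin (fun t : ℝ => cexp (-z * t)) s = Gamma s * z ^ (-s) := by
  have hopen : IsOpen {w : ℂ | 0 < w.re} := isOpen_lt continuous_const continuous_re
  have hmellin (w : ℂ) : mellin (fun t : ℝ => cexp (-w * t)) s =
      ∫ t in Ioi (0 : ℝ), cexp (-w * t) * (t : ℂ) ^ (s - 1) := by
    simp only [mellin, smul_eq_mul, mul_comm]
  have hconv (w : ℂ) (hw : 0 < w.re) :
      IntegrableOn (fun t : ℝ => cexp (-w * t) * (t : ℂ) ^ (s - 1)) (Ioi 0) := by
    have hloc : LocallyIntegrableOn (fun t : ℝ => cexp (-w * t)) (Ioi 0) :=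
      (Continuous.locallyIntegrable (by fun_prop)).locallyIntegrableOn _
    simpa only [MellinConvergent, smul_eq_mul, mul_comm] using mellinConvergent_of_isBigO_rpow
      hloc (isBigO_cexp_neg_mul_atTop hw _) (lt_add_one s.re)
      (isBigO_cexp_neg_mul_nhdsGT_zero w) hs
  have hleft : AnalyticOnNhd ℂ (fun w => mellin (fun t : ℝ => cexp (-w * t)) s) {w | 0 < w.re} := by
    simp only [hmellin]
    exact (differentiableOn_integral_cexp_neg_mul ((ae_restrict_mem measurableSet_Ioi).mono
      fun _ ht => (mem_Ioi.mp ht).le) hconv).analyticOnNhd hopen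
  have hright : AnalyticOnNhd ℂ (fun w => Gamma s * w ^ (-s)) {w | 0 < w.re} :=
    DifferentiableOn.analyticOnNhd (fun w hw => ((differentiableAt_id.cpow_const
      (Or.inl hw)).const_mul _).differentiableWithinAt) hopen
  refine hleft.eqOn_of_preconnected_of_frequently_eq hright
    (convex_halfSpace_re_gt 0).isPreconnected (z₀ := ((1 : ℝ) : ℂ)) (by simp)
    (frequently_ofReal_nhdsNE fun r hr => ?_) hz
  have hr0 : 0 < r := one_pos.trans hr
  have harg : (r : ℂ).arg ≠ Real.pi := by
    rw [arg_ofReal_of_nonneg hr0.le]; exact Real.pi_ne_zero.symm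
  rw [cpow_neg, ← inv_cpow _ _ harg, ← one_div, mul_comm,
    ← integral_cpow_mul_exp_neg_mul_Ioi hs hr0]
  simp only [mellin, smul_eq_mul, neg_mul]

theorem hasMellin_log_pow_smul_cexp_neg_mul {z s : ℂ} (hz : 0 < z.re) (hs : 0 < s.re) (n : ℕ) :
    HasMellin (fun t : ℝ => Real.log t ^ n • cexp (-z * t)) s
      (iteratedDeriv n (fun w => Gamma w * z ^ (-w)) s) := by
  have heq : (fun w => Gamma w * z ^ (-w)) =ᶠ[𝓝 s] mellin fun t : ℝ => cexp (-z * t) := by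
    filter_upwards [(isOpen_lt continuous_const continuous_re).mem_nhds hs] with w hw
    exact (mellin_cexp_neg_mul hz hw).symm
  rw [heq.iteratedDeriv_eq]
  exact hasMellin_log_pow_smul ((Continuous.locallyIntegrable (by fun_prop)).locallyIntegrableOn _)
    (isBigO_cexp_neg_mul_atTop hz _) (lt_add_one s.re) (isBigO_cexp_neg_mul_nhdsGT_zero z) hs n

end MellinExp

section GammaDerivative

open Complex Topology

lemma Gamma_one_add_mul_Gamma_one_sub_mul_sin {s : ℂ} (hs : sin (Real.pi * s) ≠ 0) :
    Gamma (1 + s) * Gamma (1 - s) * sin (Real.pi * s) = Real.pi * s := by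
  have hs0 : s ≠ 0 := by rintro rfl; simp at hs
  rw [add_comm, Gamma_add_one s hs0, mul_assoc s, Gamma_mul_Gamma_one_sub, mul_assoc,
    div_mul_cancel₀ _ hs, mul_comm]

lemma Gamma_one_add_mul_Gamma_one_sub_mul_sin_eventuallyEq :
    (fun s => Gamma (1 + s) * Gamma (1 - s) * sin (Real.pi * s)) =ᶠ[𝓝 0] (Real.pi * ·) := by
  have hderiv : HasDerivAt (fun s : ℂ => sin (Real.pi * s)) (Real.pi : ℂ) 0 := by
    simpa using ((hasDerivAt_id (0 : ℂ)).const_mul (Real.pi : ℂ)).csin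
  have hpunctured := (hderiv.eventually_ne (c := 0) (ofReal_ne_zero.mpr Real.pi_ne_zero)).mono
    fun s => Gamma_one_add_mul_Gamma_one_sub_mul_sin
  filter_upwards [eventually_nhdsWithin_iff.mp hpunctured] with s hs
  rcases eq_or_ne s 0 with rfl | h0
  · simp
  · exact hs h0

lemma contDiffAt_Gamma {s : ℂ} (hs : 0 < s.re) {n : WithTop ℕ∞} : ContDiffAt ℂ n Gamma s := by
  refine AnalyticAt.contDiffAt (analyticAt_iff_eventually_differentiableAt.mpr ?_)
  filter_upwards [(isOpen_lt continuous_const continuous_re).mem_nhds hs] with w hw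
  refine differentiableAt_Gamma w fun m hm => ?_
  have hnonpos : w.re ≤ 0 := by simp [hm]
  exact hnonpos.not_gt hw

lemma iteratedDeriv_Gamma_one_add_mul_Gamma_one_sub (n : ℕ) :
    iteratedDeriv n (fun s => Gamma (1 + s) * Gamma (1 - s)) 0 =
      ∑ i ∈ Finset.range (n + 1), n.choose i * iteratedDeriv i Gamma 1 *
        ((-1) ^ (n - i) * iteratedDeriv (n - i) Gamma 1) := by
  have hadd : ContDiffAt ℂ n (fun s => Gamma (1 + s)) 0 :=
    ContDiffAt.comp 0 (contDiffAt_Gamma (by simp)) (by fun_prop)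
  have hsub : ContDiffAt ℂ n (fun s => Gamma (1 - s)) 0 :=
    ContDiffAt.comp 0 (contDiffAt_Gamma (by simp)) (by fun_prop)
  rw [iteratedDeriv_fun_mul hadd hsub]
  simp [iteratedDeriv_comp_const_add, iteratedDeriv_comp_const_sub]

/- Compare third derivatives at `0` in `Γ(1 + s) Γ(1 - s) sin (π s) = π s`. -/
theorem iteratedDeriv_two_Gamma_one :
    iteratedDeriv 2 Gamma 1 = (Real.eulerMascheroniConstant : ℂ) ^ 2 + (Real.pi : ℂ) ^ 2 / 6 := by
  have hpi : (Real.pi : ℂ) ≠ 0 := ofReal_ne_zero.mpr Real.pi_ne_zero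
  have hGamma : ContDiffAt ℂ 3 (fun s => Gamma (1 + s) * Gamma (1 - s)) 0 :=
    (ContDiffAt.comp 0 (contDiffAt_Gamma (by simp)) (by fun_prop)).mul
      (ContDiffAt.comp 0 (contDiffAt_Gamma (by simp)) (by fun_prop))
  have hsin (n : ℕ) : iteratedDeriv n (fun s => sin (Real.pi * s)) 0 =
      Real.pi ^ n * iteratedDeriv n sin 0 := by
    simp [iteratedDeriv_comp_const_mul contDiff_sin]
  have hone : iteratedDeriv 1 Gamma 1 = -Real.eulerMascheroniConstant := by
    rw [iteratedDeriv_one, hasDerivAt_Gamma_one.deriv]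
  have hlinear : iteratedDeriv 3 (fun s : ℂ => (Real.pi : ℂ) * s) 0 = 0 := by
    simp [iteratedDeriv_succ]
  have hthird := Gamma_one_add_mul_Gamma_one_sub_mul_sin_eventuallyEq.iteratedDeriv_eq 3
  rw [hlinear, iteratedDeriv_fun_mul hGamma (by fun_prop)] at hthird
  have hsin_two : iteratedDeriv 2 sin (0 : ℂ) = 0 := by simp [iteratedDeriv_succ]
  have hsin_three : iteratedDeriv 3 sin (0 : ℂ) = -1 := by simp [iteratedDeriv_succ]
  simp only [Finset.sum_range_succ, Finset.sum_range_zero, hsin, hsin_two, hsin_three, hone,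
    iteratedDeriv_Gamma_one_add_mul_Gamma_one_sub, iteratedDeriv_zero, iteratedDeriv_one,
    Complex.deriv_sin, sin_zero, cos_zero, Gamma_one, Nat.choose, Nat.reduceSub] at hthird
  push_cast at hthird
  refine mul_left_cancel₀ hpi ?_
  linear_combination hthird / 6

end GammaDerivative

section LogSqIntegrals

open Complex Set Topology

lemma integrableOn_Ioi_zero_cexp_mul_log_pow {z : ℂ} (hz : 0 < z.re) (n : ℕ) :
    IntegrableOn (fun x : ℝ => cexp (-z * x) * (Real.log x : ℂ) ^ n) (Ioi 0) := by
  have h := (hasMellin_log_pow_smul_cexp_neg_mul hz (s := 1) (by simp) n).1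
  simpa [MellinConvergent, mul_comm] using h

lemma iteratedDeriv_two_Gamma_mul_cpow_neg_one {z : ℂ} (hz : z ≠ 0) :
    iteratedDeriv 2 (fun w => Gamma w * z ^ (-w)) 1 =
      z⁻¹ * ((Real.eulerMascheroniConstant + log z) ^ 2 + Real.pi ^ 2 / 6) := by
  have hcpow : (fun w : ℂ => z ^ (-w)) = fun w => cexp (-log z * w) := by
    ext w
    rw [cpow_def_of_ne_zero hz, mul_neg, neg_mul]
  have hexp : cexp (-log z) = z⁻¹ := by rw [Complex.exp_neg, exp_log hz]
  rw [iteratedDeriv_fun_mul (contDiffAt_Gamma (by simp)) (by rw [hcpow]; fun_prop), hcpow]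
  simp only [Finset.sum_range_succ, Finset.sum_range_zero, iteratedDeriv_cexp_const_mul, mul_one,
    hexp, iteratedDeriv_two_Gamma_one, iteratedDeriv_zero, iteratedDeriv_one,
    hasDerivAt_Gamma_one.deriv, Gamma_one, Nat.choose, Nat.reduceSub]
  push_cast
  ring

theorem integral_Ioi_zero_cexp_mul_log_sq {z : ℂ} (hz : 0 < z.re) :
    ∫ x in Ioi (0 : ℝ), cexp (-z * x) * (Real.log x : ℂ) ^ 2 =
      z⁻¹ * ((Real.eulerMascheroniConstant + log z) ^ 2 + Real.pi ^ 2 / 6) := by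
  have hz0 : z ≠ 0 := by rintro rfl; simp at hz
  rw [← iteratedDeriv_two_Gamma_mul_cpow_neg_one hz0,
    ← (hasMellin_log_pow_smul_cexp_neg_mul hz (s := 1) (by simp) 2).2]
  simp [mellin, mul_comm]

lemma hasMellin_log_pow_indicator_Ioc {s : ℂ} (hs : 0 < s.re) (n : ℕ) :
    HasMellin (fun t : ℝ => Real.log t ^ n • indicator (Ioc 0 1) (fun _ => (1 : ℂ)) t) s
      ((-1) ^ n * n.factorial / s ^ (n + 1)) := by
  have hmellin : mellin (indicator (Ioc (0 : ℝ) 1) fun _ => (1 : ℂ)) =ᶠ[𝓝 s] Inv.inv := by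
    filter_upwards [(isOpen_lt continuous_const continuous_re).mem_nhds hs] with w hw
    rw [(hasMellin_one_Ioc hw).2, one_div]
  have hderiv : iteratedDeriv n (mellin (indicator (Ioc (0 : ℝ) 1) fun _ => (1 : ℂ))) s =
      (-1) ^ n * n.factorial / s ^ (n + 1) := by
    have hpow : (-1 - n : ℤ) = -((n + 1 : ℕ) : ℤ) := by push_cast; ring
    rw [hmellin.iteratedDeriv_eq, iteratedDeriv_eq_iterate, iter_deriv_inv, hpow, zpow_neg,
      zpow_natCast, div_eq_mul_inv]
  rw [← hderiv]
  refine hasMellin_log_pow_smul (a := s.re + 1) (b := 0) ?_ ?_ (lt_add_one _) ?_ hs n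
  · exact (integrable_indicator_iff measurableSet_Ioc |>.mpr (by simp)).locallyIntegrable
      |>.locallyIntegrableOn _
  · refine EventuallyEq.trans_isBigO ?_ (Asymptotics.isBigO_zero _ _)
    filter_upwards [eventually_gt_atTop 1] with t ht
    simp [ht.not_ge]
  · refine Asymptotics.IsBigO.of_norm_le fun t => ?_
    rw [neg_zero, Real.rpow_zero]
    exact (norm_indicator_le_norm_self _ _).trans (by simp)

lemma cpow_smul_log_pow_smul_indicator (k m : ℕ) :
    (fun t : ℝ => (t : ℂ) ^ ((k : ℂ) + 1 - 1) •
      Real.log t ^ m • indicator (Ioc 0 1) (fun _ => (1 : ℂ)) t) =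
      indicator (Ioc 0 1) fun x : ℝ => (x : ℂ) ^ k * (Real.log x : ℂ) ^ m := by
  ext t
  by_cases ht : t ∈ Ioc (0 : ℝ) 1 <;> simp [ht]

lemma integrableOn_Ioc_zero_one_pow_mul_log_pow (k m : ℕ) :
    IntegrableOn (fun x : ℝ => (x : ℂ) ^ k * (Real.log x : ℂ) ^ m) (Ioc 0 1) := by
  have h := (hasMellin_log_pow_indicator_Ioc (s := k + 1) (by simpa using k.cast_add_one_pos) m).1
  rw [MellinConvergent, cpow_smul_log_pow_smul_indicator, integrableOn_indicator_iff
    measurableSet_Ioc, inter_eq_left.mpr Ioc_subset_Ioi_self] at h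
  exact h

lemma integral_Ioc_zero_one_pow_mul_log_pow (k m : ℕ) :
    ∫ x in Ioc (0 : ℝ) 1, (x : ℂ) ^ k * (Real.log x : ℂ) ^ m =
      (-1) ^ m * m.factorial / (k + 1) ^ (m + 1) := by
  have h := (hasMellin_log_pow_indicator_Ioc (s := k + 1) (by simpa using k.cast_add_one_pos) m).2
  rw [mellin, cpow_smul_log_pow_smul_indicator, setIntegral_indicator measurableSet_Ioc,
    inter_eq_right.mpr Ioc_subset_Ioi_self] at h
  exact h

theorem hasSum_integral_Ioc_zero_one_cexp_mul_log_pow (z : ℂ) (m : ℕ) :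
    HasSum (fun n : ℕ => (-z) ^ n / n.factorial * ((-1) ^ m * m.factorial / (n + 1) ^ (m + 1)))
      (∫ x in Ioc (0 : ℝ) 1, cexp (-z * x) * (Real.log x : ℂ) ^ m) := by
  have hlog : IntegrableOn (fun x : ℝ => (Real.log x : ℂ) ^ m) (Ioc 0 1) := by
    simpa using integrableOn_Ioc_zero_one_pow_mul_log_pow 0 m
  have hseries (w : ℂ) : HasSum (fun n : ℕ => w ^ n / n.factorial) (cexp w) := by
    rw [exp_eq_exp_ℂ]
    exact NormedSpace.expSeries_div_hasSum_exp w
  simp_rw [← integral_Ioc_zero_one_pow_mul_log_pow, ← integral_const_mul]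
  refine hasSum_integral_of_dominated_convergence
    (fun n x => ‖z‖ ^ n / n.factorial * ‖(Real.log x : ℂ) ^ m‖) (fun n => by fun_prop)
    (fun n => ?_) (.of_forall fun x => (Real.summable_pow_div_factorial _).mul_right _) ?_
    (.of_forall fun x => ?_)
  · filter_upwards [ae_restrict_mem measurableSet_Ioc] with x hx
    have hpow : ‖(x : ℂ) ^ n‖ ≤ 1 := by
      rw [norm_pow, norm_real, Real.norm_of_nonneg hx.1.le]
      exact pow_le_one₀ hx.1.le hx.2
    rw [norm_mul, norm_mul, norm_div, norm_pow, norm_neg, Complex.norm_natCast]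
    gcongr
    exact mul_le_of_le_one_left (norm_nonneg _) hpow
  · simp_rw [tsum_mul_right]
    exact hlog.norm.const_mul _
  · have hterm (n : ℕ) : (-z) ^ n / n.factorial * ((x : ℂ) ^ n * (Real.log x : ℂ) ^ m) =
        (-z * x) ^ n / n.factorial * (Real.log x : ℂ) ^ m := by ring
    simpa only [hterm] using (hseries (-z * x)).mul_right ((Real.log x : ℂ) ^ m)

theorem hasSum_neg_pow_div_factorial_mul_sq (z : ℂ) :
    HasSum (fun n : ℕ => (-z) ^ (n + 1) / ((n + 1).factorial * (n + 1) ^ 2))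
      (-(z / 2) * ∫ x in Ioc (0 : ℝ) 1, cexp (-z * x) * (Real.log x : ℂ) ^ 2) := by
  have hterm (n : ℕ) : (-z) ^ (n + 1) / ((n + 1).factorial * (n + 1 : ℂ) ^ 2) =
      -(z / 2) * ((-z) ^ n / n.factorial * ((-1) ^ 2 * (2).factorial / (n + 1) ^ (2 + 1))) := by
    have hn : (n + 1 : ℂ) ≠ 0 := Nat.cast_add_one_ne_zero n
    have hfact : (n.factorial : ℂ) ≠ 0 := Nat.cast_ne_zero.mpr n.factorial_ne_zero
    rw [Nat.factorial_succ, Nat.factorial_two]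
    push_cast
    field_simp
    ring
  simpa only [hterm] using (hasSum_integral_Ioc_zero_one_cexp_mul_log_pow z 2).mul_left (-(z / 2))

end LogSqIntegrals

section IntegrationByParts

open Complex Set Topology Asymptotics

lemma hasDerivAt_cexp_neg_mul_ofReal (z : ℂ) (x : ℝ) :
    HasDerivAt (fun x : ℝ => cexp (-z * x)) (-z * cexp (-z * x)) x := by
  simpa [mul_comm] using ((hasDerivAt_id (x : ℂ)).const_mul (-z)).cexp.comp_ofReal

lemma tendsto_integral_cexp_mul_deriv_sub {f f' : ℝ → ℂ} {z : ℂ} {a : ℝ}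
    (hf : ∀ x, a ≤ x → HasDerivAt f (f' x) x) (hf' : ContinuousOn f' (Ici a))
    (hlim : Tendsto (fun T : ℝ => cexp (-z * T) * f T) atTop (𝓝 0)) :
    Tendsto (fun T : ℝ =>
        (∫ x in a..T, cexp (-z * x) * f' x) - z * ∫ x in a..T, cexp (-z * x) * f x)
      atTop (𝓝 (-(cexp (-z * a) * f a))) := by
  rw [← zero_sub (cexp (-z * a) * f a)]
  refine (hlim.sub_const _).congr' ?_
  filter_upwards [eventually_ge_atTop a] with T hT
  have hsubset : uIcc a T ⊆ Ici a := Set.uIcc_of_le hT ▸ Icc_subset_Ici_self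
  rw [intervalIntegral.integral_mul_deriv_eq_deriv_mul
    (fun x _ => hasDerivAt_cexp_neg_mul_ofReal z x) (fun x hx => hf x (hsubset hx))
    (Continuous.intervalIntegrable (by fun_prop) _ _) (hf'.mono hsubset).intervalIntegrable]
  simp only [mul_assoc, intervalIntegral.integral_const_mul]
  ring

lemma hasDerivAt_log_div_self {x : ℝ} (hx : x ≠ 0) :
    HasDerivAt (fun x => Real.log x / x) ((1 - Real.log x) / x ^ 2) x :=
  ((Real.hasDerivAt_log hx).div (hasDerivAt_id x) hx).congr_deriv (by simp [hx])

lemma tendsto_log_div_self_atTop : Tendsto (fun x => Real.log x / x) atTop (𝓝 0) :=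
  Real.isLittleO_log_id_atTop.tendsto_div_nhds_zero

lemma continuousAt_one_sub_log_div_sq {x : ℝ} (hx : x ≠ 0) :
    ContinuousAt (fun x : ℝ => (1 - Real.log x) / x ^ 2) x :=
  (continuousAt_const.sub (Real.continuousAt_log hx)).div (continuousAt_id.pow 2)
    (pow_ne_zero 2 hx)

lemma integrableOn_Ioi_one_sub_log_div_sq :
    IntegrableOn (fun x : ℝ => (1 - Real.log x) / x ^ 2) (Ioi 1) := by
  have he : 1 ≤ Real.exp 1 := Real.one_le_exp zero_le_one
  have hne {x : ℝ} (hx : 1 ≤ x) : x ≠ 0 := (one_pos.trans_le hx).ne'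
  rw [← Ioc_union_Ioi_eq_Ioi he]
  refine IntegrableOn.union ?_ ?_
  · refine (ContinuousOn.integrableOn_Icc fun x hx => ?_).mono_set Ioc_subset_Icc_self
    exact (continuousAt_one_sub_log_div_sq (hne hx.1)).continuousWithinAt
  · refine integrableOn_Ioi_deriv_of_nonpos' (g := fun x => Real.log x / x) (fun x hx =>
      hasDerivAt_log_div_self (hne (he.trans hx))) (fun x hx => ?_) tendsto_log_div_self_atTop
    have hlog : 1 ≤ Real.log x := (Real.le_log_iff_exp_le ((Real.exp_pos 1).trans hx)).mpr hx.le
    exact div_nonpos_of_nonpos_of_nonneg (by linarith) (sq_nonneg x)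

lemma tendsto_cexp_mul_log_div_atTop {z : ℂ} (hz : 0 ≤ z.re) :
    Tendsto (fun T : ℝ => cexp (-z * T) * (Real.log T / T : ℝ)) atTop (𝓝 0) := by
  have hlog : Tendsto (fun T : ℝ => ((Real.log T / T : ℝ) : ℂ)) atTop (𝓝 0) := by
    simpa using tendsto_log_div_self_atTop.ofReal
  refine isBoundedUnder_le_mul_tendsto_zero (isBoundedUnder_of_eventually_le (a := 1) ?_) hlog
  filter_upwards [eventually_ge_atTop 0] with T hT using norm_cexp_neg_mul_ofReal_le_one hz hT

lemma tendsto_cexp_mul_log_sq_atTop {z : ℂ} (hz : 0 < z.re) :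
    Tendsto (fun T : ℝ => cexp (-z * T) * (Real.log T : ℂ) ^ 2) atTop (𝓝 0) := by
  have hlog : (fun T : ℝ => (Real.log T : ℂ) ^ 2) =o[atTop] (id : ℝ → ℝ) := by
    simpa only [← ofReal_pow] using isLittleO_ofReal_left.mpr Real.isLittleO_pow_log_id_atTop
  refine (isLittleO_one_iff ℝ).mp
    (((isBigO_cexp_neg_mul_atTop hz (-1)).mul_isLittleO hlog).trans_eventuallyEq ?_)
  filter_upwards [eventually_ne_atTop 0] with T hT
  rw [Real.rpow_neg_one, id, inv_mul_cancel₀ hT]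

lemma tendsto_integral_cexp_mul_log_div_of_re_nonneg {z : ℂ} (hz : 0 ≤ z.re) (hz0 : z ≠ 0) :
    Tendsto (fun T : ℝ => ∫ x in (1 : ℝ)..T, cexp (-z * x) * (Real.log x / x : ℝ)) atTop
      (𝓝 (z⁻¹ * ∫ x in Ioi (1 : ℝ), cexp (-z * x) * ((1 - Real.log x) / x ^ 2 : ℝ))) := by
  have hne {x : ℝ} (hx : 1 ≤ x) : x ≠ 0 := (one_pos.trans_le hx).ne'
  have hparts := tendsto_integral_cexp_mul_deriv_sub (a := 1)
    (fun x hx => (hasDerivAt_log_div_self (hne hx)).ofReal_comp)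
    (fun x hx => (continuous_ofReal.continuousAt.comp
      (continuousAt_one_sub_log_div_sq (hne hx))).continuousWithinAt)
    (tendsto_cexp_mul_log_div_atTop hz)
  have htail := intervalIntegral_tendsto_integral_Ioi 1 (integrable_cexp_neg_mul
    (ae_restrict_of_forall_mem measurableSet_Ioi fun x hx => (one_pos.trans hx).le)
    integrableOn_Ioi_one_sub_log_div_sq.ofReal hz) tendsto_id
  simpa [hz0] using (htail.sub hparts).const_mul z⁻¹

lemma tendsto_integral_cexp_mul_log_div_of_re_pos {z : ℂ} (hz : 0 < z.re) :
    Tendsto (fun T : ℝ => ∫ x in (1 : ℝ)..T, cexp (-z * x) * (Real.log x / x : ℝ)) atTop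
      (𝓝 (z / 2 * ∫ x in Ioi (1 : ℝ), cexp (-z * x) * (Real.log x : ℂ) ^ 2)) := by
  have hne {x : ℝ} (hx : 1 ≤ x) : x ≠ 0 := (one_pos.trans_le hx).ne'
  have hderiv (x : ℝ) (hx : 1 ≤ x) : HasDerivAt (fun x : ℝ => (Real.log x : ℂ) ^ 2)
      (2 * (Real.log x / x : ℝ)) x :=
    ((Real.hasDerivAt_log (hne hx)).ofReal_comp.pow 2).congr_deriv (by push_cast; ring)
  have hcont : ContinuousOn (fun x : ℝ => 2 * ((Real.log x / x : ℝ) : ℂ)) (Ici 1) := fun x hx =>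
    (continuousAt_const.mul (continuous_ofReal.continuousAt.comp
      (hasDerivAt_log_div_self (hne hx)).continuousAt)).continuousWithinAt
  have hparts := tendsto_integral_cexp_mul_deriv_sub hderiv hcont
    (tendsto_cexp_mul_log_sq_atTop hz)
  have htail := intervalIntegral_tendsto_integral_Ioi 1
    ((integrableOn_Ioi_zero_cexp_mul_log_pow hz 2).mono_set (Ioi_subset_Ioi zero_le_one))
    tendsto_id
  simpa [mul_left_comm _ (2 : ℂ), div_eq_inv_mul, mul_assoc] using
    (hparts.add (htail.const_mul z)).const_mul 2⁻¹

end IntegrationByParts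

section HalfPlane

open Complex Set Topology

lemma inv_mul_integral_Ioi_one_cexp_mul_one_sub_log_div_sq_of_re_pos {z : ℂ} (hz : 0 < z.re) :
    z⁻¹ * ∫ x in Ioi (1 : ℝ), cexp (-z * x) * ((1 - Real.log x) / x ^ 2 : ℝ) =
      ((Real.eulerMascheroniConstant + log z) ^ 2 + Real.pi ^ 2 / 6) / 2 -
        z / 2 * ∫ x in Ioc (0 : ℝ) 1, cexp (-z * x) * (Real.log x : ℂ) ^ 2 := by
  have hz0 : z ≠ 0 := by rintro rfl; simp at hz
  have hint := integrableOn_Ioi_zero_cexp_mul_log_pow hz 2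
  have hsplit := setIntegral_union (Ioc_disjoint_Ioi le_rfl) measurableSet_Ioi
    (hint.mono_set Ioc_subset_Ioi_self) (hint.mono_set (Ioi_subset_Ioi zero_le_one))
  rw [Ioc_union_Ioi_eq_Ioi zero_le_one, integral_Ioi_zero_cexp_mul_log_sq hz] at hsplit
  rw [tendsto_nhds_unique (tendsto_integral_cexp_mul_log_div_of_re_nonneg hz.le hz0)
    (tendsto_integral_cexp_mul_log_div_of_re_pos hz), eq_sub_iff_add_eq', ← mul_add, ← hsplit]
  field_simp

lemma mem_slitPlane_of_re_nonneg {z : ℂ} (hz : 0 ≤ z.re) (hz0 : z ≠ 0) : z ∈ slitPlane := by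
  refine mem_slitPlane_iff.mpr (hz.lt_or_eq.imp_right fun hre him => hz0 ?_)
  exact Complex.ext hre.symm him

lemma inv_mul_integral_Ioi_one_cexp_mul_one_sub_log_div_sq {z : ℂ} (hz : 0 ≤ z.re) (hz0 : z ≠ 0) :
    z⁻¹ * ∫ x in Ioi (1 : ℝ), cexp (-z * x) * ((1 - Real.log x) / x ^ 2 : ℝ) =
      ((Real.eulerMascheroniConstant + log z) ^ 2 + Real.pi ^ 2 / 6) / 2 -
        z / 2 * ∫ x in Ioc (0 : ℝ) 1, cexp (-z * x) * (Real.log x : ℂ) ^ 2 := by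
  have hlogsq : IntegrableOn (fun x : ℝ => (Real.log x : ℂ) ^ 2) (Ioc 0 1) := by
    simpa using integrableOn_Ioc_zero_one_pow_mul_log_pow 0 2
  have hlog : ContinuousOn log {w | 0 ≤ w.re ∧ w ≠ 0} := fun w hw =>
    (continuousAt_clog (mem_slitPlane_of_re_nonneg hw.1 hw.2)).continuousWithinAt
  have hinv : ContinuousOn (·⁻¹) {w : ℂ | 0 ≤ w.re ∧ w ≠ 0} :=
    continuousOn_inv₀.mono fun w hw => hw.2
  have htail := (continuousOn_integral_cexp_neg_mul
    (ae_restrict_of_forall_mem measurableSet_Ioi fun x hx => (one_pos.trans hx).le)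
    integrableOn_Ioi_one_sub_log_div_sq.ofReal).mono
      (fun w hw => hw.1 : {w : ℂ | 0 ≤ w.re ∧ w ≠ 0} ⊆ _)
  have hhead := (continuousOn_integral_cexp_neg_mul
    (ae_restrict_of_forall_mem measurableSet_Ioc fun x hx => hx.1.le) hlogsq).mono
      (fun w hw => hw.1 : {w : ℂ | 0 ≤ w.re ∧ w ≠ 0} ⊆ _)
  refine EqOn.of_subset_closure (s := {w : ℂ | 0 < w.re}) (t := {w | 0 ≤ w.re ∧ w ≠ 0})
    (fun w => inv_mul_integral_Ioi_one_cexp_mul_one_sub_log_div_sq_of_re_pos)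
    (hinv.mul htail) (by fun_prop) (fun w hw => ⟨le_of_lt hw, ?_⟩) (fun w hw => ?_) ⟨hz, hz0⟩
  · rintro rfl; simp at hw
  · rw [closure_setOfPred_lt_re]
    exact hw.1

theorem tendsto_integral_cexp_mul_log_div {z : ℂ} (hz : 0 ≤ z.re) (hz0 : z ≠ 0) :
    Tendsto (fun T : ℝ => ∫ x in (1 : ℝ)..T, cexp (-z * x) * (Real.log x / x : ℝ)) atTop
      (𝓝 (((Real.eulerMascheroniConstant + log z) ^ 2 + Real.pi ^ 2 / 6) / 2 +
        ∑' n : ℕ, (-z) ^ (n + 1) / ((n + 1).factorial * (n + 1 : ℂ) ^ 2))) := by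
  rw [(hasSum_neg_pow_div_factorial_mul_sq z).tsum_eq, neg_mul, ← sub_eq_add_neg,
    ← inv_mul_integral_Ioi_one_cexp_mul_one_sub_log_div_sq hz hz0]
  exact tendsto_integral_cexp_mul_log_div_of_re_nonneg hz hz0

end HalfPlane

section ImaginaryAxis

open Complex

lemma neg_ofReal_mul_I_pow_two_mul (a : ℝ) (n : ℕ) :
    (-(a * I)) ^ (2 * n) = (((-a ^ 2) ^ n : ℝ) : ℂ) := by
  rw [pow_mul, neg_sq, mul_pow, I_sq]
  push_cast
  ring

lemma hasSum_neg_sq_pow_div_factorial_mul_sq (a : ℝ) :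
    HasSum (fun n : ℕ => (-a ^ 2) ^ (n + 1) / ((2 * (n + 1)).factorial * (2 * (n + 1) : ℝ) ^ 2))
      (∑' n : ℕ, (-(a * I)) ^ (n + 1) / ((n + 1).factorial * (n + 1 : ℂ) ^ 2)).re := by
  have hsum := hasSum_re (hasSum_neg_pow_div_factorial_mul_sq (a * I)).summable.hasSum
  have hinj : Function.Injective fun n : ℕ => 2 * n + 1 := fun m n h => by simpa using h
  rw [← hinj.hasSum_iff fun n hn => ?_] at hsum
  · refine hsum.congr_fun fun n => ?_
    have hcast : (((2 * n + 1 : ℕ) : ℂ) + 1) = ((2 * (n + 1) : ℝ) : ℂ) := by push_cast; ring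
    have hterm : (-(a * I)) ^ (2 * n + 1 + 1) /
        ((2 * n + 1 + 1).factorial * ((2 * n + 1 : ℕ) + 1 : ℂ) ^ 2) =
        (((-a ^ 2) ^ (n + 1) / ((2 * (n + 1)).factorial * (2 * (n + 1) : ℝ) ^ 2) : ℝ) : ℂ) := by
      rw [show 2 * n + 1 + 1 = 2 * (n + 1) by ring, neg_ofReal_mul_I_pow_two_mul, hcast]
      push_cast
      rfl
    exact (congrArg re hterm).symm
  · obtain ⟨k, rfl⟩ : Even n := by
      rw [← Nat.not_odd_iff_even]
      rintro ⟨k, rfl⟩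
      exact hn ⟨k, rfl⟩
    have hterm : (-(a * I)) ^ (k + k + 1) / ((k + k + 1).factorial * ((k + k : ℕ) + 1 : ℂ) ^ 2) =
        (((-a ^ 2) ^ k * -a / ((k + k + 1).factorial * ((k + k : ℕ) + 1 : ℝ) ^ 2) : ℝ) : ℂ) *
          I := by
      rw [← two_mul, pow_succ, neg_ofReal_mul_I_pow_two_mul]
      push_cast
      ring
    rw [hterm, re_ofReal_mul, I_re, mul_zero]

lemma re_integral_cexp_mul_log_div (a : ℝ) {T : ℝ} (hT : 1 ≤ T) :
    (∫ x in (1 : ℝ)..T, cexp (-(a * I) * x) * (Real.log x / x : ℝ)).re =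
      ∫ x in (1 : ℝ)..T, Real.cos (a * x) * Real.log x / x := by
  have hint : IntervalIntegrable (fun x : ℝ => cexp (-(a * I) * x) * (Real.log x / x : ℝ))
      volume 1 T := by
    refine ContinuousOn.intervalIntegrable fun x hx => ContinuousAt.continuousWithinAt ?_
    have hx0 : x ≠ 0 := (one_pos.trans_le (Set.uIcc_of_le hT ▸ hx).1).ne'
    exact ContinuousAt.mul (by fun_prop)
      (continuous_ofReal.continuousAt.comp (hasDerivAt_log_div_self hx0).continuousAt)
  rw [← reCLM_apply, ← reCLM.intervalIntegral_comp_comm hint]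
  refine intervalIntegral.integral_congr fun x _ => ?_
  rw [reCLM_apply, re_mul_ofReal, exp_re]
  simp [mul_div_assoc]

end ImaginaryAxis

/-- For every real `a > 0`, the improper integral `∫₁^∞ cos(ax)(ln x)/x dx` exists as
`lim_{T→∞} ∫₁^T` and equals
`-π²/24 + γ(γ/2 + ln a) + (ln a)²/2 + Σ_{n≥1} (-a²)^n/((2n)! (2n)²)`,
the series converging absolutely. -/
theorem cos_log_integral_one_infty (a : ℝ) (ha : 0 < a) :
    Summable (fun n : ℕ =>
      |(-a ^ 2) ^ (n + 1) / ((2 * (n + 1)).factorial * (2 * (n + 1) : ℝ) ^ 2)|) ∧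
    Tendsto (fun T : ℝ => ∫ x in (1 : ℝ)..T, Real.cos (a * x) * Real.log x / x)
      atTop
      (nhds (-Real.pi ^ 2 / 24 +
        Real.eulerMascheroniConstant * (Real.eulerMascheroniConstant / 2 + Real.log a) +
        Real.log a ^ 2 / 2 +
        ∑' n : ℕ, (-a ^ 2) ^ (n + 1) / ((2 * (n + 1)).factorial * (2 * (n + 1) : ℝ) ^ 2))) := by
  have hseries := hasSum_neg_sq_pow_div_factorial_mul_sq a
  refine ⟨hseries.summable.abs, ?_⟩
  have hlimit := (Complex.continuous_re.tendsto _).comp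
    (tendsto_integral_cexp_mul_log_div (z := a * Complex.I) (by simp) (by simp [ha.ne']))
  have hlog : Complex.log (a * Complex.I) = Real.log a + Real.pi / 2 * Complex.I := by
    rw [Complex.log_ofReal_mul ha Complex.I_ne_zero, Complex.log_I]
  have hvalue : (((Real.eulerMascheroniConstant + Complex.log (a * Complex.I)) ^ 2 +
      Real.pi ^ 2 / 6) / 2).re = -Real.pi ^ 2 / 24 + Real.eulerMascheroniConstant *
        (Real.eulerMascheroniConstant / 2 + Real.log a) + Real.log a ^ 2 / 2 := by
    rw [hlog]
    simp only [pow_two, Complex.div_ofNat_re, Complex.div_ofNat_im, Complex.add_re, Complex.add_im,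
      Complex.mul_re, Complex.mul_im, Complex.ofReal_re, Complex.ofReal_im, Complex.I_re,
      Complex.I_im]
    ring
  rw [Complex.add_re, hvalue, ← hseries.tsum_eq] at hlimit
  refine hlimit.congr' ?_
  filter_upwards [eventually_ge_atTop 1] with T hT using re_integral_cexp_mul_log_div a hT
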